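/- Let V₁ be a 2-dimensional real vector space with a nondegenerate alternating bilinear form a, and let s be the symmetric bilinear form on V₁ ⊗ V₁ with s(v⊗w, v'⊗w') = a(v,v')·a(w,w'). Then the restriction of s to the subspace Sym²V₁ ⊂ V₁ ⊗ V₁ of symmetric tensors (i.e., tensors fixed by the flip v⊗w ↦ w⊗v) is nondegenerate of signature (1,2). -/

import Mathlib

open TensorProduct Module

noncomputable section

/-- A real symmetric bilinear form `s` has signature `(p,q)` on the subspace `U₀`: `U₀`
is an `s`-orthogonal direct sum of a `p`-dimensional subspace on which `s` is positive
definite and a `q`-dimensional subspace on which `s` is negative definite. -/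
def RealSig {U : Type*} [AddCommGroup U] [Module ℝ U]
    (s : LinearMap.BilinForm ℝ U) (U₀ : Submodule ℝ U) (p q : ℕ) : Prop :=
  ∃ P N : Submodule ℝ U, P ≤ U₀ ∧ N ≤ U₀ ∧ P ⊓ N = ⊥ ∧ P ⊔ N = U₀ ∧
    Module.finrank ℝ P = p ∧ Module.finrank ℝ N = q ∧
    (∀ v ∈ P, ∀ w ∈ N, s v w = 0) ∧
    (∀ v ∈ P, v ≠ 0 → 0 < s v v) ∧
    (∀ w ∈ N, w ≠ 0 → s w w < 0)

/-!
Choose a basis `e, f` of the plane with `a e f = 1`. The tensors `e ⊗ e + f ⊗ f`,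
`e ⊗ e - f ⊗ f` and `e ⊗ f + f ⊗ e` span the symmetric square and are orthogonal for `a ⊗ a`,
with squares `2`, `-2` and `-2`. A form with an orthogonal spanning family of nonzero squares has
the signature given by their signs, and is therefore nondegenerate on the span.
-/

theorem apply_linearCombination_self_of_iIsOrtho {ι R M : Type*} [CommSemiring R]
    [AddCommMonoid M] [Module R M] {B : LinearMap.BilinForm R M} {u : ι → M}
    (hu : B.iIsOrtho u) (c : ι →₀ R) :
    B (Finsupp.linearCombination R u c) (Finsupp.linearCombination R u c) =
      c.sum fun i r ↦ r ^ 2 * B (u i) (u i) := by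
  simp only [Finsupp.linearCombination_apply, Finsupp.sum, LinearMap.BilinForm.sum_left,
    LinearMap.BilinForm.sum_right, map_smul, LinearMap.smul_apply, smul_eq_mul]
  refine Finset.sum_congr rfl fun i hi ↦ ?_
  have hcross : ∀ j ∈ c.support, j ≠ i → c j * B (u j) (u i) = 0 := fun j _ hji ↦ by
    rw [LinearMap.BilinForm.iIsOrtho_def.mp hu j i hji, mul_zero]
  rw [Finset.sum_eq_single_of_mem i hi hcross]
  ring

section DefiniteSpan

variable {ι R M : Type*} [CommRing R] [LinearOrder R] [IsStrictOrderedRing R] [AddCommGroup M]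
  [Module R M] {B : LinearMap.BilinForm R M} {u : ι → M}

theorem apply_self_pos_of_mem_span_range
    (hu : B.iIsOrtho u) (hpos : ∀ i, 0 < B (u i) (u i)) {x : M}
    (hx : x ∈ Submodule.span R (Set.range u)) (hx0 : x ≠ 0) : 0 < B x x := by
  obtain ⟨c, rfl⟩ := Finsupp.mem_span_range_iff_exists_finsupp.mp hx
  rw [← Finsupp.linearCombination_apply] at hx0 ⊢
  have hc : c ≠ 0 := by
    rintro rfl
    exact hx0 (map_zero _)
  rw [apply_linearCombination_self_of_iIsOrtho hu]
  exact Finset.sum_pos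
    (fun i hi ↦ mul_pos (sq_pos_of_ne_zero (Finsupp.mem_support_iff.mp hi)) (hpos i))
    (Finsupp.support_nonempty_iff.mpr hc)

theorem apply_self_neg_of_mem_span_range
    (hu : B.iIsOrtho u) (hneg : ∀ i, B (u i) (u i) < 0) {x : M}
    (hx : x ∈ Submodule.span R (Set.range u)) (hx0 : x ≠ 0) : B x x < 0 := by
  have hu' : (-B).iIsOrtho u := fun i j hij ↦ by simpa using hu hij
  simpa using apply_self_pos_of_mem_span_range hu' (fun i ↦ by simpa using hneg i) hx hx0

end DefiniteSpan

namespace RealSig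

variable {U : Type*} [AddCommGroup U] [Module ℝ U] {s : LinearMap.BilinForm ℝ U}

theorem eq_zero_of_forall_apply_eq_zero {U₀ : Submodule ℝ U} {p q : ℕ} (hs : RealSig s U₀ p q)
    {x : U} (hx : x ∈ U₀) (h : ∀ y ∈ U₀, s x y = 0) : x = 0 := by
  obtain ⟨P, N, hPU, hNU, -, rfl, -, -, hPN, hpos, hneg⟩ := hs
  obtain ⟨v, hv, w, hw, rfl⟩ := Submodule.mem_sup.mp hx
  have hw0 : w = 0 := by
    by_contra hw0
    have hww : s w w = 0 := by simpa [hPN v hv w hw] using h w (hNU hw)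
    exact (hneg w hw hw0).ne hww
  subst hw0
  have hv0 : v = 0 := by
    by_contra hv0
    have hvv : s v v = 0 := by simpa using h v (hPU hv)
    exact (hpos v hv hv0).ne' hvv
  rw [hv0, add_zero]

theorem span_range_of_iIsOrtho {ι κ : Type*} [Fintype ι] [Fintype κ] {u : ι ⊕ κ → U}
    (hu : s.iIsOrtho u) (hpos : ∀ i, 0 < s (u (.inl i)) (u (.inl i)))
    (hneg : ∀ j, s (u (.inr j)) (u (.inr j)) < 0) :
    RealSig s (Submodule.span ℝ (Set.range u)) (Fintype.card ι) (Fintype.card κ) := by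
  have hu_inl : s.iIsOrtho (u ∘ Sum.inl) := fun i j hij ↦ hu (Sum.inl_injective.ne hij)
  have hu_inr : s.iIsOrtho (u ∘ Sum.inr) := fun i j hij ↦ hu (Sum.inr_injective.ne hij)
  have hli : LinearIndependent ℝ u :=
    LinearMap.BilinForm.linearIndependent_of_iIsOrtho hu
      (Sum.rec (fun i ↦ (hpos i).ne') fun j ↦ (hneg j).ne)
  obtain ⟨hli_inl, hli_inr, hdisj⟩ := linearIndependent_sum.mp hli
  refine ⟨Submodule.span ℝ (Set.range (u ∘ Sum.inl)), Submodule.span ℝ (Set.range (u ∘ Sum.inr)),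
    Submodule.span_mono (Set.range_comp_subset_range _ _),
    Submodule.span_mono (Set.range_comp_subset_range _ _), hdisj.eq_bot, ?_,
    finrank_span_eq_card hli_inl, finrank_span_eq_card hli_inr, ?_,
    fun _ ↦ apply_self_pos_of_mem_span_range hu_inl hpos,
    fun _ ↦ apply_self_neg_of_mem_span_range hu_inr hneg⟩
  · rw [← Submodule.span_union, ← Set.Sum.elim_range, Sum.elim_comp_inl_inr]
  · refine fun v hv w hw ↦
      LinearMap.BilinMap.apply_apply_mem_of_mem_span ⊥ _ _ s ?_ v w hv hw
    rintro _ ⟨i, rfl⟩ _ ⟨j, rfl⟩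
    exact hu Sum.inl_ne_inr

end RealSig

theorem exists_basis_apply_eq_one_of_isAlt {K V : Type*} [Field K] [AddCommGroup V] [Module K V]
    (hdim : finrank K V = 2) {a : LinearMap.BilinForm K V} (ha : a.IsAlt) (ha0 : a ≠ 0) :
    ∃ b : Basis (Fin 2) K V, a (b 0) (b 1) = 1 := by
  obtain ⟨e, f, hef⟩ : ∃ e f, a e f = 1 := by
    obtain ⟨x, y, hxy⟩ : ∃ x y, a x y ≠ 0 := by
      contrapose! ha0
      exact LinearMap.ext₂ ha0
    exact ⟨x, (a x y)⁻¹ • y, by simp [hxy]⟩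
  have hli : LinearIndependent K ![e, f] := by
    refine LinearIndependent.pair_iff.mpr fun c d hcd ↦ ⟨?_, ?_⟩
    · simpa [hef, ha.self_eq_zero] using congr(a $hcd f)
    · simpa [hef, ha.self_eq_zero] using congr(a e $hcd)
  exact ⟨basisOfLinearIndependentOfCardEqFinrank hli (by simp [hdim]), by simpa using hef⟩

section SymmetricTensors

variable {ι R M : Type*} [CommRing R] [AddCommGroup M] [Module R M]

variable (R M) in
/-- The symmetric square `Sym²M`, realised inside `M ⊗ M` as the tensors fixed by the flip
(rather than as a quotient of `M ⊗ M`). -/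
def symmetricTensors : Submodule R (M ⊗[R] M) :=
  LinearMap.ker ((TensorProduct.comm R M M).toLinearMap - LinearMap.id)

theorem mem_symmetricTensors {t : M ⊗[R] M} :
    t ∈ symmetricTensors R M ↔ TensorProduct.comm R M M t = t := by
  simp [symmetricTensors, sub_eq_zero]

theorem symmetricTensors_eq_range_id_add_comm [Invertible (2 : R)] :
    symmetricTensors R M =
      LinearMap.range (LinearMap.id + (TensorProduct.comm R M M).toLinearMap) := by
  ext t
  rw [mem_symmetricTensors, LinearMap.mem_range]
  constructor
  · intro ht
    refine ⟨(⅟2 : R) • t, ?_⟩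
    simp [ht, ← add_smul, invOf_two_add_invOf_two]
  · rintro ⟨x, rfl⟩
    simp [add_comm]

theorem symmetricTensors_eq_span_range [Invertible (2 : R)] (b : Basis ι R M) :
    symmetricTensors R M =
      Submodule.span R (Set.range fun i : ι × ι ↦ b i.1 ⊗ₜ[R] b i.2 + b i.2 ⊗ₜ[R] b i.1) := by
  rw [symmetricTensors_eq_range_id_add_comm, LinearMap.range_eq_map, ← (b.tensorProduct b).span_eq,
    Submodule.map_span, ← Set.range_comp]
  congr! 2
  ext i
  simp [Basis.tensorProduct_apply']

/-- For a basis `e, f` of a plane `M`, the frame of `Sym²M` formed by `e ⊗ e + f ⊗ f`, indexed by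
`Sum.inl`, and `e ⊗ e - f ⊗ f`, `e ⊗ f + f ⊗ e`, indexed by `Sum.inr`. If `e, f` is a symplectic
basis for `a`, it diagonalises `a ⊗ a`, and the summands of the index type record the sign. -/
def symmetricFrame (b : Basis (Fin 2) R M) : Fin 1 ⊕ Fin 2 → M ⊗[R] M :=
  Sum.elim ![b 0 ⊗ₜ b 0 + b 1 ⊗ₜ b 1] ![b 0 ⊗ₜ b 0 - b 1 ⊗ₜ b 1, b 0 ⊗ₜ b 1 + b 1 ⊗ₜ b 0]

theorem symmetricFrame_mem (b : Basis (Fin 2) R M) (i : Fin 1 ⊕ Fin 2) :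
    symmetricFrame b i ∈ symmetricTensors R M := by
  rw [mem_symmetricTensors]
  rcases i with i | i <;> fin_cases i <;> simp [symmetricFrame, add_comm]

theorem span_range_symmetricFrame [Invertible (2 : R)] (b : Basis (Fin 2) R M) :
    Submodule.span R (Set.range (symmetricFrame b)) = symmetricTensors R M := by
  refine le_antisymm (Submodule.span_le.mpr (Set.range_subset_iff.mpr (symmetricFrame_mem b))) ?_
  have hmem (i) : symmetricFrame b i ∈ Submodule.span R (Set.range (symmetricFrame b)) :=
    Submodule.subset_span (Set.mem_range_self i)
  have hee : b 0 ⊗ₜ[R] b 0 + b 0 ⊗ₜ[R] b 0 =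
      symmetricFrame b (.inl 0) + symmetricFrame b (.inr 0) := by
    simp [symmetricFrame]
  have hff : b 1 ⊗ₜ[R] b 1 + b 1 ⊗ₜ[R] b 1 =
      symmetricFrame b (.inl 0) - symmetricFrame b (.inr 0) := by
    simp [symmetricFrame]
  have hef : b 0 ⊗ₜ[R] b 1 + b 1 ⊗ₜ[R] b 0 = symmetricFrame b (.inr 1) := rfl
  have hfe : b 1 ⊗ₜ[R] b 0 + b 0 ⊗ₜ[R] b 1 = symmetricFrame b (.inr 1) := add_comm _ _
  rw [symmetricTensors_eq_span_range b, Submodule.span_le]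
  simp only [Set.range_subset_iff, Prod.forall, Fin.forall_fin_two, SetLike.mem_coe,
    hee, hff, hef, hfe]
  exact ⟨⟨add_mem (hmem _) (hmem _), hmem _⟩, hmem _, sub_mem (hmem _) (hmem _)⟩

theorem tmul_self_apply_symmetricFrame {a : LinearMap.BilinForm R M} (ha : a.IsAlt)
    {b : Basis (Fin 2) R M} (hb : a (b 0) (b 1) = 1) (i j : Fin 1 ⊕ Fin 2) :
    a.tmul a (symmetricFrame b i) (symmetricFrame b j) =
      Matrix.diagonal (Sum.elim (fun _ ↦ 2) fun _ ↦ -2) i j := by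
  have hb' : a (b 1) (b 0) = -1 := by rw [← ha.neg_eq, hb]
  rcases i with i | i <;> rcases j with j | j <;> fin_cases i <;> fin_cases j <;>
    simp [symmetricFrame, ha.self_eq_zero, hb, hb', Matrix.diagonal] <;> norm_num

end SymmetricTensors

theorem realSig_tmul_self_symmetricTensors {V : Type*} [AddCommGroup V] [Module ℝ V]
    (hdim : finrank ℝ V = 2) {a : LinearMap.BilinForm ℝ V} (ha : a.IsAlt) (ha0 : a ≠ 0) :
    RealSig (a.tmul a) (symmetricTensors ℝ V) 1 2 := by
  obtain ⟨b, hb⟩ := exists_basis_apply_eq_one_of_isAlt hdim ha ha0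
  have hgram := tmul_self_apply_symmetricFrame ha hb
  have hortho : LinearMap.BilinForm.iIsOrtho (a.tmul a) (symmetricFrame b) :=
    fun i j hij ↦ (hgram i j).trans (Matrix.diagonal_apply_ne _ hij)
  rw [← span_range_symmetricFrame b]
  simpa using RealSig.span_range_of_iIsOrtho hortho (by simp [hgram]) (by simp [hgram])

/-- with `s` the symmetric form on `V₁ ⊗ V₁` induced by the symplectic form
`a`, the restriction of `s` to the subspace `Sym²V₁` of symmetric tensors (the tensors
fixed by the flip `v⊗w ↦ w⊗v`) is nondegenerate of signature `(1,2)`. -/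
theorem sym_square_signature_one_two
    (V₁ : Type*) [AddCommGroup V₁] [Module ℝ V₁] [FiniteDimensional ℝ V₁]
    (hdim : Module.finrank ℝ V₁ = 2)
    (a : LinearMap.BilinForm ℝ V₁) (halt : LinearMap.IsAlt a)
    (hnd : LinearMap.BilinForm.Nondegenerate a)
    (s : LinearMap.BilinForm ℝ (V₁ ⊗[ℝ] V₁))
    (hs : ∀ v w v' w' : V₁, s (v ⊗ₜ[ℝ] w) (v' ⊗ₜ[ℝ] w') = a v v' * a w w') :
    let Sym2V : Submodule ℝ (V₁ ⊗[ℝ] V₁) :=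
      LinearMap.ker ((TensorProduct.comm ℝ V₁ V₁).toLinearMap - LinearMap.id)
    (∀ x ∈ Sym2V, (∀ y ∈ Sym2V, s x y = 0) → x = 0) ∧
    RealSig s Sym2V 1 2 := by
  intro Sym2V
  have : Nontrivial V₁ := Module.nontrivial_of_finrank_pos (R := ℝ) (by omega)
  have hsa : s = a.tmul a := by
    ext v w v' w'
    simp [hs, mul_comm]
  have hsig : RealSig s Sym2V 1 2 :=
    hsa ▸ realSig_tmul_self_symmetricTensors hdim halt hnd.ne_zero
  exact ⟨fun _ ↦ hsig.eq_zero_of_forall_apply_eq_zero, hsig⟩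

end
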